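/- arXiv:1507.06763 — 2 statements merged into one kernel-verified Lean document; each statement's English description precedes it below -/
import Mathlib

section
/- Let X be a database of size N in ℝ^d and let t ≥ 0 and 0 ≤ t' < t be integers. For every database X_t of size N with H(X,X_t) = t and every database X_t' of size N with H(X_t,X_t') = 1, |q_count(X_t,k,r) − q_count(X_t',k,r)| ≤ min( N, max( U^{(t)}_{t'}(X,k,r), U^{(t)}_{t'}(X,k−1,r) ) + t + 1 ). -/
open Finset
open scoped Classical

noncomputable section

/-- A point of `ℝ^d`. -/
abbrev Pt (d : ℕ) := EuclideanSpace ℝ (Fin d)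

/-- Hamming distance between two databases of size `N`: the number of differing records. -/
def hamming {N d : ℕ} (X X' : Fin N → Pt d) : ℕ :=
  (univ.filter fun i => X i ≠ X' i).card

/-- The degree of record `i` in `X`: the number of other records within distance `r`. -/
def deg {N d : ℕ} (X : Fin N → Pt d) (r : ℝ) (i : Fin N) : ℕ :=
  (univ.filter fun j => j ≠ i ∧ ‖X j - X i‖ ≤ r).card

/-- The number of outlier records: records with fewer than `k` neighbors within radius `r`. -/
def qCount {N d : ℕ} (X : Fin N → Pt d) (k : ℕ) (r : ℝ) : ℕ :=
  (univ.filter fun i => deg X r i < k).card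

/-- `V(X,m,r)`: the set of record indices of degree exactly `m` (empty for `m < 0`). -/
def Vset {N d : ℕ} (X : Fin N → Pt d) (r : ℝ) (m : ℤ) : Finset (Fin N) :=
  univ.filter fun i => (deg X r i : ℤ) = m

/-- `CV(X,x,m,r)`: the set of degree-`m` record indices within distance `r` of `x`
(empty for `m < 0`). -/
def CV {N d : ℕ} (X : Fin N → Pt d) (x : Pt d) (m : ℤ) (r : ℝ) : Finset (Fin N) :=
  (Vset X r m).filter fun i => ‖X i - x‖ ≤ r

/-- The union `⋃_{j ≥ 0, |j−m| ≤ t} CV(X,x,j,r)` (terms with `j < 0` are empty). -/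
def CVUnion {N d : ℕ} (X : Fin N → Pt d) (x : Pt d) (m : ℤ) (t : ℕ) (r : ℝ) :
    Finset (Fin N) :=
  (Finset.Icc (m - t) (m + t)).biUnion fun j => CV X x j r

/-- `C^{(t)}(X,x,m,r) = |⋃_{j ≥ 0, |j−m| ≤ t} CV(X,x,j,r)|`. -/
def Ct {N d : ℕ} (X : Fin N → Pt d) (x : Pt d) (m : ℤ) (t : ℕ) (r : ℝ) : ℕ :=
  (CVUnion X x m t r).card

/-- `U^{(t)}_{t'}(X,m,r) = (sup_{x ∈ ℝ^d} C^{(t')}(X,x,m,r))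
  + |⋃_{j ≥ 0, t' < |j−m| ≤ t} V(X,j,r)|`. -/
def Uval {N d : ℕ} (X : Fin N → Pt d) (m : ℤ) (t' t : ℕ) (r : ℝ) : ℕ :=
  sSup {n : ℕ | ∃ x : Pt d, n = Ct X x m t' r} +
    (((Finset.Icc (m - t) (m + t)).filter fun j => (t' : ℤ) < |j - m|).biUnion
      fun j => Vset X r j).card

theorem deg_le_deg_add_hamming {N d : ℕ} (X Y : Fin N → Pt d) (r : ℝ) {i : Fin N}
    (h : X i = Y i) : deg X r i ≤ deg Y r i + hamming X Y := by
  refine (card_le_card ?_).trans (card_union_le _ _)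
  intro j hj
  simp only [mem_union, mem_filter, mem_univ, true_and] at hj ⊢
  by_cases hXY : X j = Y j
  · left
    rwa [← hXY, ← h]
  · exact Or.inr hXY

theorem hamming_comm {N d : ℕ} (X Y : Fin N → Pt d) : hamming X Y = hamming Y X := by
  simp only [hamming, ne_comm]

/-- If the degree of an unchanged record increases, some changed record became its neighbor. -/
theorem exists_changed_neighbor_of_deg_lt {N d : ℕ} {Y Z : Fin N → Pt d} {r : ℝ} {i : Fin N}
    (h : Y i = Z i) (hlt : deg Y r i < deg Z r i) :
    ∃ j, Y j ≠ Z j ∧ ‖Z j - Z i‖ ≤ r := by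
  by_contra! hno
  refine hlt.not_ge (card_le_card ?_)
  intro j hj
  simp only [mem_filter, mem_univ, true_and] at hj ⊢
  by_cases hYZ : Y j = Z j
  · rwa [hYZ, h]
  · exact absurd hj.2 (hno j hYZ).not_ge

theorem Ct_le_sSup {N d : ℕ} (X : Fin N → Pt d) (x : Pt d) (m : ℤ) (t : ℕ) (r : ℝ) :
    Ct X x m t r ≤ sSup {n : ℕ | ∃ x : Pt d, n = Ct X x m t r} := by
  refine le_csSup ⟨N, ?_⟩ ⟨x, rfl⟩
  rintro n ⟨y, rfl⟩
  simpa [Ct] using card_le_univ (CVUnion X y m t r)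

/-- The unchanged records of degree `m` in `Y` that lie within `r` of a given point number at
most `U^{(t)}_{t'}(X,m,r)`, where `t` is the number of changed records. -/
theorem card_unchanged_near_le_Uval {N d : ℕ} (X Y : Fin N → Pt d) (x : Pt d) (m : ℤ)
    (t' : ℕ) (r : ℝ) :
    (univ.filter fun i => X i = Y i ∧ (deg Y r i : ℤ) = m ∧ ‖Y i - x‖ ≤ r).card ≤
      Uval X m t' (hamming X Y) r := by
  refine le_trans (card_le_card (t := CVUnion X x m t' r ∪ _) ?_)
    ((card_union_le _ _).trans (Nat.add_le_add_right (Ct_le_sSup X x m t' r) _))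
  intro i hi
  simp only [mem_filter, mem_univ, true_and] at hi
  obtain ⟨hXY, hdeg, hnear⟩ := hi
  have h₁ := deg_le_deg_add_hamming X Y r hXY
  have h₂ := deg_le_deg_add_hamming Y X r hXY.symm
  rw [hamming_comm Y X] at h₂
  rw [← hXY] at hnear
  simp only [mem_union, CVUnion, CV, Vset, mem_biUnion, mem_filter, mem_univ, true_and, mem_Icc]
  rcases le_or_gt |(deg X r i : ℤ) - m| (t' : ℤ) with h | h
  · rw [abs_le] at h
    exact Or.inl ⟨_, ⟨by omega, by omega⟩, rfl, hnear⟩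
  · exact Or.inr ⟨_, ⟨⟨by omega, by omega⟩, h⟩, rfl⟩

/-- A set whose unchanged records other than `s` all have degree `m` in `Y` and lie within `r`
of a common point is bounded by `U^{(t)}_{t'}(X,m,r) + t + 1`. -/
theorem card_le_Uval_add {N d : ℕ} (X Y : Fin N → Pt d) (x : Pt d) (m : ℤ) (t' : ℕ) (r : ℝ)
    (s : Fin N) (A : Finset (Fin N))
    (hA : ∀ i ∈ A, i ≠ s → (deg Y r i : ℤ) = m ∧ ‖Y i - x‖ ≤ r) :
    A.card ≤ Uval X m t' (hamming X Y) r + hamming X Y + 1 := by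
  have hsub : A ⊆ insert s
      ((univ.filter fun i => X i = Y i ∧ (deg Y r i : ℤ) = m ∧ ‖Y i - x‖ ≤ r) ∪
        univ.filter fun i => X i ≠ Y i) := by
    intro i hi
    simp only [mem_insert, mem_union, mem_filter, mem_univ, true_and]
    have := hA i hi
    tauto
  refine (card_le_card hsub).trans ((card_insert_le _ _).trans (Nat.add_le_add_right ?_ 1))
  exact (card_union_le _ _).trans
    (Nat.add_le_add_right (card_unchanged_near_le_Uval X Y x m t' r) _)

theorem exists_forall_ne_iff_of_hamming_eq_one {N d : ℕ} {Y Z : Fin N → Pt d}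
    (h : hamming Y Z = 1) : ∃ s, ∀ i, Y i ≠ Z i ↔ i = s := by
  obtain ⟨s, hs⟩ := card_eq_one.mp h
  exact ⟨s, fun i => by simpa using Finset.ext_iff.mp hs i⟩

/-- Computable upper bound on the `t`-step local sensitivity: if `H(X,X_t) = t` and
`H(X_t,X_t') = 1`, then the change in the outlier count is at most
`min( N, max( U^{(t)}_{t'}(X,k,r), U^{(t)}_{t'}(X,k−1,r) ) + t + 1 )`. -/
theorem local_sensitivity_t_Uval_bound
    (d N k t t' : ℕ) (hd : 1 ≤ d) (hk : 1 ≤ k) (r : ℝ) (hr : 0 < r) (ht' : t' < t)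
    (X Xt Xt' : Fin N → Pt d) (hH : hamming X Xt = t) (hH' : hamming Xt Xt' = 1) :
    |(qCount Xt k r : ℤ) - (qCount Xt' k r : ℤ)| ≤
      min (N : ℤ)
        (((max (Uval X (k : ℤ) t' t r) (Uval X ((k : ℤ) - 1) t' t r) : ℕ) : ℤ) + t + 1) := by
  obtain ⟨s, hs⟩ := exists_forall_ne_iff_of_hamming_eq_one hH'
  have heq : ∀ i, i ≠ s → Xt i = Xt' i := fun i hi => by
    by_contra h
    exact hi ((hs i).mp h)
  subst hH
  set A := univ.filter fun i => deg Xt r i < k with hA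
  set B := univ.filter fun i => deg Xt' r i < k with hB
  have hlost : (A \ B).card ≤ Uval X ((k : ℤ) - 1) t' (hamming X Xt) r + hamming X Xt + 1 := by
    refine card_le_Uval_add X Xt (Xt' s) _ t' r s _ fun i hi his => ?_
    simp only [hA, hB, mem_sdiff, mem_filter, mem_univ, true_and, not_lt] at hi
    have hle := deg_le_deg_add_hamming Xt' Xt r (heq i his).symm
    rw [hamming_comm, hH'] at hle
    obtain ⟨j, hj, hnear⟩ :=
      exists_changed_neighbor_of_deg_lt (heq i his) (hi.1.trans_le hi.2)
    obtain rfl := (hs j).mp hj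
    exact ⟨by omega, by rwa [heq i his, norm_sub_rev]⟩
  have hgained : (B \ A).card ≤ Uval X (k : ℤ) t' (hamming X Xt) r + hamming X Xt + 1 := by
    refine card_le_Uval_add X Xt (Xt s) _ t' r s _ fun i hi his => ?_
    simp only [hA, hB, mem_sdiff, mem_filter, mem_univ, true_and, not_lt] at hi
    have hle := deg_le_deg_add_hamming Xt Xt' r (heq i his)
    rw [hH'] at hle
    obtain ⟨j, hj, hnear⟩ :=
      exists_changed_neighbor_of_deg_lt (heq i his).symm (hi.1.trans_le hi.2)
    obtain rfl := (hs j).mp hj.symm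
    exact ⟨by omega, by rwa [norm_sub_rev]⟩
  have hAN : A.card ≤ N := by simpa using card_le_univ A
  have hBN : B.card ≤ N := by simpa using card_le_univ B
  have hAB := card_sdiff_add_card_inter A B
  have hBA := card_sdiff_add_card_inter B A
  rw [inter_comm] at hBA
  have hqA : qCount Xt k r = A.card := rfl
  have hqB : qCount Xt' k r = B.card := rfl
  rw [hqA, hqB, abs_le]
  omega
end
end

section
/- Let 1 ≤ c ≤ d, let F_c be the (finite, nonempty) family of c-element subsets of {1,…,d}, let ε > 0, and define the utility u(X,S) = q_count(X,k,r,S) / min(N, k·K_c + 1) and the exponential-mechanism distribution p_X(S) = exp(ε·u(X,S)) / ∑_{S'∈F_c} exp(ε·u(X,S')) on F_c. Then for all databases X, X' of size N in ℝ^d with H(X,X') = 1 and every S ∈ F_c, p_X(S) ≤ e^{2ε}·p_{X'}(S). (The exponential mechanism with utility u_subspace guarantees 2ε-differential privacy.) -/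
open Finset
open scoped Classical

noncomputable section

/-- The subspace distance `dist_S(x,y) = sqrt( (∑_{i∈S} (x_i − y_i)²) / |S| )`. -/
def sdist {d : ℕ} (S : Finset (Fin d)) (x y : Pt d) : ℝ :=
  Real.sqrt ((∑ i ∈ S, (x i - y i) ^ 2) / S.card)

/-- The degree of record `i` in `X` in subspace `S`: the number of other records within
subspace distance `r`. -/
def sdeg {N d : ℕ} (S : Finset (Fin d)) (X : Fin N → Pt d) (r : ℝ) (i : Fin N) : ℕ :=
  (univ.filter fun j => j ≠ i ∧ sdist S (X j) (X i) ≤ r).card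

/-- `q_count(X,k,r,S)`: the number of outlier records in subspace `S`. -/
def qCountS {N d : ℕ} (X : Fin N → Pt d) (k : ℕ) (r : ℝ) (S : Finset (Fin d)) : ℕ :=
  (univ.filter fun i => sdeg S X r i < k).card

/-- `K` is the kissing number of `ℝ^c`: the largest `n` for which there exist `n` unit
vectors with pairwise distances at least `1`. -/
def IsKissingNumber (c K : ℕ) : Prop :=
  IsGreatest {n : ℕ | ∃ y : Fin n → Pt c,
    (∀ i, ‖y i‖ = 1) ∧ ∀ i j, i ≠ j → 1 ≤ ‖y i - y j‖} K

/-- The utility function `u(X,S) = q_count(X,k,r,S) / min(N, k·K_c + 1)` for the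
exponential mechanism, where `K_c` is the kissing number of `ℝ^{|S|}`. -/
def uSubspace {N d : ℕ} (k : ℕ) (r : ℝ) (Kc : ℕ) (X : Fin N → Pt d)
    (S : Finset (Fin d)) : ℝ :=
  (qCountS X k r S : ℝ) / ((min N (k * Kc + 1) : ℕ) : ℝ)

/-- The orthogonal projection of `ℝ^d` onto the coordinates in `S`, in increasing order. -/
def coordProj {d c : ℕ} (S : Finset (Fin d)) (hS : S.card = c) (x : Pt d) : Pt c :=
  WithLp.toLp 2 fun i => x (S.orderEmbOfFin hS i)

lemma sdist_le_iff {d c : ℕ} (hc : 1 ≤ c) (S : Finset (Fin d)) (hS : S.card = c) (x y : Pt d)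
    (r : ℝ) :
    sdist S x y ≤ r ↔ ‖coordProj S hS x - coordProj S hS y‖ ≤ r * √c := by
  have hc0 : (0 : ℝ) < √c := Real.sqrt_pos.2 (by exact_mod_cast hc)
  have hsum : ∑ i ∈ S, (x i - y i) ^ 2 =
      ∑ i : Fin c, (x (S.orderEmbOfFin hS i) - y (S.orderEmbOfFin hS i)) ^ 2 := by
    conv_lhs => rw [← Finset.map_orderEmbOfFin_univ S hS]
    rw [Finset.sum_map]
    rfl
  rw [sdist, hS, Real.sqrt_div' _ (Nat.cast_nonneg c), div_le_iff₀ hc0, EuclideanSpace.norm_eq,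
    hsum]
  simp [coordProj]

/-- Two vectors of a ball whose distance exceeds the radius make an angle of at least `60°`. -/
lemma one_le_norm_normalize_sub {E : Type*} [NormedAddCommGroup E] [InnerProductSpace ℝ E]
    {u v : E} {R : ℝ} (hu : ‖u‖ ≤ R) (hv : ‖v‖ ≤ R) (huv : R < ‖u - v‖) :
    1 ≤ ‖‖u‖⁻¹ • u - ‖v‖⁻¹ • v‖ := by
  have hu0 : 0 < ‖u‖ := by
    rcases eq_or_ne u 0 with rfl | h
    · simp only [zero_sub, norm_neg] at huv; linarith
    · exact norm_pos_iff.2 h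
  have hv0 : 0 < ‖v‖ := by
    rcases eq_or_ne v 0 with rfl | h
    · simp only [sub_zero] at huv; linarith
    · exact norm_pos_iff.2 h
  have hsq : R ^ 2 ≤ ‖u - v‖ ^ 2 := by nlinarith
  rw [norm_sub_sq_real] at hsq
  have hin : 2 * inner ℝ u v ≤ ‖u‖ * ‖v‖ := by
    rcases le_total ‖u‖ ‖v‖ with h | h <;> nlinarith
  have hin' : 2 * (‖u‖⁻¹ * (‖v‖⁻¹ * inner ℝ u v)) ≤ 1 := by
    have : 2 * (‖u‖⁻¹ * (‖v‖⁻¹ * inner ℝ u v)) = 2 * inner ℝ u v / (‖u‖ * ‖v‖) := by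
      field_simp
    rw [this]
    exact div_le_one_of_le₀ hin (by positivity)
  have key : 1 ≤ ‖‖u‖⁻¹ • u - ‖v‖⁻¹ • v‖ ^ 2 := by
    rw [norm_sub_sq_real, norm_smul, norm_smul, inner_smul_left, inner_smul_right]
    simp only [norm_inv, norm_norm, inv_mul_cancel₀ hu0.ne', inv_mul_cancel₀ hv0.ne',
      conj_trivial]
    linarith
  exact (one_le_sq_iff₀ (norm_nonneg _)).1 key

lemma IsKissingNumber.one_le {c K : ℕ} (hc : 1 ≤ c) (hK : IsKissingNumber c K) : 1 ≤ K := by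
  refine hK.2 ⟨fun _ => EuclideanSpace.single ⟨0, hc⟩ 1, fun _ => by simp, fun i j hij => ?_⟩
  exact absurd (Subsingleton.elim i j) hij

/-- A subset of a ball of `ℝ^c` with pairwise distances exceeding the radius has at most
`K_c` elements. -/
lemma IsKissingNumber.card_le {c K : ℕ} (hc : 1 ≤ c) (hK : IsKissingNumber c K) {ι : Type*}
    (I : Finset ι) (v : ι → Pt c) {R : ℝ} (hv : ∀ i ∈ I, ‖v i‖ ≤ R)
    (hsep : ∀ i ∈ I, ∀ j ∈ I, i ≠ j → R < ‖v i - v j‖) : I.card ≤ K := by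
  rcases le_or_gt I.card 1 with h1 | h1
  · exact h1.trans (hK.one_le hc)
  have hne : ∀ i ∈ I, v i ≠ 0 := by
    intro i hi h0
    obtain ⟨j, hj, hji⟩ := Finset.exists_mem_ne h1 i
    have := hsep j hj i hi hji
    rw [h0, sub_zero] at this
    exact absurd (hv j hj) this.not_ge
  refine hK.2 ⟨fun n => ‖v (I.equivFin.symm n)‖⁻¹ • v (I.equivFin.symm n), fun n => ?_,
    fun m n hmn => ?_⟩
  · rw [norm_smul, norm_inv, norm_norm]
    exact inv_mul_cancel₀ (norm_ne_zero_iff.2 (hne _ (I.equivFin.symm n).2))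
  · refine one_le_norm_normalize_sub (hv _ (I.equivFin.symm m).2) (hv _ (I.equivFin.symm n).2)
      (hsep _ (I.equivFin.symm m).2 _ (I.equivFin.symm n).2 fun h => hmn ?_)
    exact I.equivFin.symm.injective (Subtype.ext h)

/-- A family of points in a ball, each within the radius of at most `k` members of the family
(itself included), has at most `k * K_c` members. -/
lemma IsKissingNumber.card_le_mul {c K : ℕ} (hc : 1 ≤ c) (hK : IsKissingNumber c K) {ι : Type*}
    (A : Finset ι) (v : ι → Pt c) {R : ℝ} (hR : 0 ≤ R) (k : ℕ) (hv : ∀ i ∈ A, ‖v i‖ ≤ R)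
    (hdeg : ∀ i ∈ A, (A.filter fun j => ‖v j - v i‖ ≤ R).card ≤ k) : A.card ≤ k * K := by
  obtain ⟨I, hI, hmax⟩ := Finset.exists_max_image
    (A.powerset.filter fun I => ∀ i ∈ I, ∀ j ∈ I, i ≠ j → R < ‖v i - v j‖) Finset.card
    ⟨∅, by simp⟩
  simp only [Finset.mem_filter, Finset.mem_powerset] at hI hmax
  obtain ⟨hIA, hsep⟩ := hI
  have hcover : A ⊆ I.biUnion fun i => A.filter fun j => ‖v j - v i‖ ≤ R := by
    intro a ha
    by_contra hcon
    simp only [Finset.mem_biUnion, Finset.mem_filter, not_exists, not_and, not_le] at hcon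
    have hfar : ∀ i ∈ I, R < ‖v a - v i‖ := fun i hi => hcon i hi ha
    have haI : a ∉ I := fun h => by
      have := hfar a h
      rw [sub_self, norm_zero] at this
      linarith
    have := hmax (insert a I) ⟨Finset.insert_subset ha hIA, by
      intro i hi j hj hij
      rw [Finset.mem_insert] at hi hj
      rcases hi with rfl | hi <;> rcases hj with rfl | hj
      · exact absurd rfl hij
      · exact hfar j hj
      · rw [norm_sub_rev]; exact hfar i hi
      · exact hsep i hi j hj hij⟩
    rw [Finset.card_insert_of_notMem haI] at this
    omega
  calc A.card ≤ _ := Finset.card_le_card hcover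
    _ ≤ I.card * k := Finset.card_biUnion_le_card_mul _ _ _ fun i hi => hdeg i (hIA hi)
    _ ≤ K * k := Nat.mul_le_mul_right _ (hK.card_le hc I v (fun i hi => hv i (hIA hi)) hsep)
    _ = k * K := Nat.mul_comm _ _

lemma qCountS_le_add_mul {d N k c K : ℕ} (hc : 1 ≤ c) {r : ℝ} (hr : 0 < r)
    (hK : IsKissingNumber c K) {X X' : Fin N → Pt d} (t : Fin N) (hX : ∀ i, i ≠ t → X i = X' i)
    (S : Finset (Fin d)) (hS : S.card = c) :
    qCountS X k r S ≤ qCountS X' k r S + (k * K + 1) := by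
  set A : Finset (Fin N) :=
    univ.filter fun i => i ≠ t ∧ sdeg S X r i < k ∧ ¬ sdeg S X' r i < k with hA
  have hsub : (univ.filter fun i => sdeg S X r i < k) ⊆
      (univ.filter fun i => sdeg S X' r i < k) ∪ insert t A := by
    intro i hi
    simp only [hA, Finset.mem_union, Finset.mem_insert, Finset.mem_filter, Finset.mem_univ,
      true_and] at hi ⊢
    tauto
  have hnear : ∀ i ∈ A, sdist S (X' t) (X i) ≤ r := by
    intro i hi
    simp only [hA, Finset.mem_filter, Finset.mem_univ, true_and] at hi
    obtain ⟨hit, hlt, hge⟩ := hi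
    by_contra hfar
    refine hge (lt_of_le_of_lt (Finset.card_le_card fun j hj => ?_) hlt)
    simp only [Finset.mem_filter, Finset.mem_univ, true_and] at hj ⊢
    rw [← hX i hit] at hj
    have hjt : j ≠ t := by
      rintro rfl
      exact hfar hj.2
    rwa [hX j hjt]
  have hAcard : A.card ≤ k * K := by
    refine hK.card_le_mul hc A (fun i => coordProj S hS (X i) - coordProj S hS (X' t))
      (R := r * √c) (by positivity) k (fun i hi => ?_) fun i hi => ?_
    · rw [norm_sub_rev]
      exact (sdist_le_iff hc S hS _ _ r).1 (hnear i hi)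
    · have hlt : sdeg S X r i < k := (Finset.mem_filter.1 hi).2.2.1
      refine le_trans (Finset.card_le_card (t := insert i
        (univ.filter fun j => j ≠ i ∧ sdist S (X j) (X i) ≤ r)) fun j hj => ?_)
        ((Finset.card_insert_le _ _).trans hlt)
      rw [Finset.mem_filter, sub_sub_sub_cancel_right, ← sdist_le_iff hc] at hj
      simp only [Finset.mem_insert, Finset.mem_filter, Finset.mem_univ, true_and]
      tauto
  calc qCountS X k r S ≤ _ := Finset.card_le_card hsub
    _ ≤ qCountS X' k r S + (insert t A).card := Finset.card_union_le _ _
    _ ≤ qCountS X' k r S + (k * K + 1) := by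
      have := Finset.card_insert_le t A
      omega

/-- The utility has sensitivity at most `1`. -/
lemma uSubspace_le_add_one {d N k c K : ℕ} (hc : 1 ≤ c) {r : ℝ} (hr : 0 < r)
    (hK : IsKissingNumber c K) {X X' : Fin N → Pt d} (t : Fin N) (hX : ∀ i, i ≠ t → X i = X' i)
    (S : Finset (Fin d)) (hS : S.card = c) :
    uSubspace k r K X S ≤ uSubspace k r K X' S + 1 := by
  have hN : 0 < N := t.pos
  have hpos : (0 : ℝ) < ((min N (k * K + 1) : ℕ) : ℝ) := by
    exact_mod_cast lt_min hN (Nat.succ_pos _)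
  have hqN : qCountS X k r S ≤ N := (Finset.card_le_univ _).trans_eq (Fintype.card_fin N)
  have hq : qCountS X k r S ≤ qCountS X' k r S + min N (k * K + 1) := by
    have := qCountS_le_add_mul (k := k) hc hr hK t hX S hS
    omega
  rw [uSubspace, uSubspace, div_add_one hpos.ne']
  gcongr
  exact_mod_cast hq

/-- The exponential mechanism for a utility of sensitivity at most `1` is `2ε`-private. -/
lemma exp_div_sum_le {α : Type*} {F : Finset α} {u u' : α → ℝ} {ε : ℝ} (hε : 0 ≤ ε)
    (h : ∀ a ∈ F, u a ≤ u' a + 1) (h' : ∀ a ∈ F, u' a ≤ u a + 1) {a : α} (ha : a ∈ F) :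
    Real.exp (ε * u a) / ∑ b ∈ F, Real.exp (ε * u b) ≤
      Real.exp (2 * ε) * (Real.exp (ε * u' a) / ∑ b ∈ F, Real.exp (ε * u' b)) := by
  have hpos : ∀ w : α → ℝ, 0 < ∑ b ∈ F, Real.exp (ε * w b) := fun w =>
    Finset.sum_pos (fun _ _ => Real.exp_pos _) ⟨a, ha⟩
  have hexp : ∀ x y : ℝ, x ≤ y + 1 → Real.exp (ε * x) ≤ Real.exp ε * Real.exp (ε * y) := by
    intro x y hxy
    rw [← Real.exp_add, Real.exp_le_exp]
    nlinarith
  have hsum : ∑ b ∈ F, Real.exp (ε * u' b) ≤ Real.exp ε * ∑ b ∈ F, Real.exp (ε * u b) := by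
    rw [Finset.mul_sum]
    exact Finset.sum_le_sum fun b hb => hexp _ _ (h' b hb)
  rw [← mul_div_assoc, div_le_div_iff₀ (hpos u) (hpos u'), two_mul, Real.exp_add]
  calc _ ≤ (Real.exp ε * Real.exp (ε * u' a)) * (Real.exp ε * ∑ b ∈ F, Real.exp (ε * u b)) :=
        mul_le_mul (hexp _ _ (h a ha)) hsum (hpos u').le (by positivity)
    _ = _ := by ring

/-- The exponential mechanism with the utility function `u_subspace` guarantees
`2ε`-differential privacy: for neighboring databases `X ∼ X'` and any `c`-element
subspace `S`, `p_X(S) ≤ e^{2ε}·p_{X'}(S)`, where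
`p_X(S) = exp(ε·u(X,S)) / ∑_{S' ∈ F_c} exp(ε·u(X,S'))` on the family `F_c` of
`c`-element subsets of `{1,…,d}`. -/
theorem exponential_mechanism_subspace_dp
    (d N k c : ℕ) (hd : 1 ≤ d) (hk : 1 ≤ k) (hc : 1 ≤ c) (hcd : c ≤ d)
    (r : ℝ) (hr : 0 < r) (ε : ℝ) (hε : 0 < ε)
    (K : ℕ) (hK : IsKissingNumber c K)
    (X X' : Fin N → Pt d) (hH : hamming X X' = 1)
    (S : Finset (Fin d)) (hS : S.card = c) :
    Real.exp (ε * uSubspace k r K X S) /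
        (∑ S' ∈ (univ.filter fun S' : Finset (Fin d) => S'.card = c),
          Real.exp (ε * uSubspace k r K X S')) ≤
      Real.exp (2 * ε) *
        (Real.exp (ε * uSubspace k r K X' S) /
          (∑ S' ∈ (univ.filter fun S' : Finset (Fin d) => S'.card = c),
            Real.exp (ε * uSubspace k r K X' S'))) := by
  obtain ⟨t, ht⟩ := Finset.card_eq_one.1 hH
  have hX : ∀ i, i ≠ t → X i = X' i := by
    intro i hi
    by_contra hne
    have : i ∈ ({t} : Finset (Fin N)) := ht ▸ Finset.mem_filter.2 ⟨Finset.mem_univ i, hne⟩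
    exact hi (Finset.mem_singleton.1 this)
  refine exp_div_sum_le (u := uSubspace k r K X) (u' := uSubspace k r K X') hε.le
    (fun S' hS' => ?_) (fun S' hS' => ?_) (by simpa using hS)
  · exact uSubspace_le_add_one hc hr hK t hX S' (Finset.mem_filter.1 hS').2
  · exact uSubspace_le_add_one hc hr hK t (fun i hi => (hX i hi).symm) S'
      (Finset.mem_filter.1 hS').2
end
end
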